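/- For every i ≥ 0, dim_k Tor_i^{E ⊗_k E^op}(k, E) = binom(n+i−1, i); equivalently, the Hilbert series Σ_{i≥0} dim_k Tor_i^{E⊗_k E^op}(k,E)·t^i of the Hochschild homology of E with coefficients in k equals 1/(1−t)^n, the Hilbert series of the commutative polynomial ring in n variables. -/

import Mathlib

/-!
**Statement 11**: for the exterior algebra `E` on `n` generators over a field `k`,
`dim_k Tor_i^{E ⊗ E^op}(k, E) = binom(n+i-1, i)` for all `i ≥ 0`; equivalently the
Hilbert series of the Hochschild homology of `E` with coefficients in `k` is
`1/(1-t)^n`, the Hilbert series of the polynomial ring in `n` variables.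

We realize `Tor_i^{E ⊗ E^op}(k, E)` concretely as the `i`-th homology of the complex
`k ⊗_{E ⊗ E^op} C`, where `C` (`C_i = E^{⊗(i+2)}`) is the acyclic Hochschild complex,
a free `E ⊗ E^op`-resolution of `E`; this complex has terms `E^{⊗ i}` and the
differential `hDelta` below, built from the augmentation `ε : E → k`.
-/
open TensorProduct

noncomputable section

section HochschildHomology

variable (k : Type) [Field k] (A : Type) [Ring A] [Algebra k A]
variable (ε : A →ₐ[k] k)

/-- The terms `A^{⊗ i}` of the complex `k ⊗_{A ⊗ A^op} C` obtained from the acyclic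
Hochschild complex `C` (the free `A ⊗ A^op`-resolution `C_i = A^{⊗ (i+2)}` of `A`)
by tensoring with `k` over `A ⊗ A^op`; its homology computes
`Tor^{A ⊗ A^op}(k, A)`, the Hochschild homology of `A` with coefficients in `k`. -/
def hW : ℕ → ModuleCat k
  | 0 => ModuleCat.of k k
  | n + 1 => ModuleCat.of k (A ⊗[k] (hW n))

/-- Applying the augmentation `ε` to the leftmost tensor factor. -/
def hEps (n : ℕ) : (A ⊗[k] (hW k A n : Type)) →ₗ[k] (hW k A n : Type) :=
  (TensorProduct.lid k (hW k A n : Type)).toLinearMap.comp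
    (TensorProduct.map ε.toLinearMap LinearMap.id)

/-- The differential
`δ(a₁ ⊗ ⋯ ⊗ a_i) = ε(a₁)·(a₂ ⊗ ⋯ ⊗ a_i)
  + ∑_{j=1}^{i-1} (-1)^j a₁ ⊗ ⋯ ⊗ a_j a_{j+1} ⊗ ⋯ ⊗ a_i
  + (-1)^i ε(a_i)·(a₁ ⊗ ⋯ ⊗ a_{i-1})`
of the complex computing the Hochschild homology of `A` with coefficients in `k`,
defined by the recursion `δ(a ⊗ x) = ε(a)·x - (a·x) - a ⊗ δ(x) + a ⊗ (ε·x)`. -/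
def hDelta : ∀ n, (hW k A (n + 1) : Type) →ₗ[k] (hW k A n : Type)
  | 0 => 0
  | n + 1 =>
      (fun (f g h e : (hW k A (n + 2) : Type) →ₗ[k] (hW k A (n + 1) : Type)) =>
          f - g - h + e)
        (hEps k A ε (n + 1))
        ((TensorProduct.map (LinearMap.mul' k A) LinearMap.id).comp
          (TensorProduct.assoc k A A (hW k A n)).symm.toLinearMap)
        (TensorProduct.map LinearMap.id (hDelta n))
        (TensorProduct.map LinearMap.id (hEps k A ε n))

/-- The homology of the above complex: `H 0 = k / im(δ_1)` and for `i ≥ 1`,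
`H i = ker(δ_i) / im(δ_{i+1})`.  By the standard theory of the Hochschild
resolution, `H i ≅ Tor_i^{A ⊗ A^op}(k, A) = HH_i(A, k)`; we use this complex as
the definition of these Tor groups. -/
def hH : ℕ → ModuleCat k
  | 0 => ModuleCat.of k ((hW k A 0 : Type) ⧸ LinearMap.range (hDelta k A ε 0))
  | i + 1 => ModuleCat.of k
      ((LinearMap.ker (hDelta k A ε i)) ⧸
        (Submodule.comap (LinearMap.ker (hDelta k A ε i)).subtype
          (LinearMap.range (hDelta k A ε (i + 1)))))

end HochschildHomology

section Exterior

variable (k : Type) [Field k] (n : ℕ)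

/-- The defining relations of the exterior algebra: `e_i e_j + e_j e_i = 0` for all
`i, j` and `e_i² = 0` for all `i`; the quotient of the free algebra by the ring
congruence they generate is the quotient by the two-sided ideal they generate. -/
def ExtRel : FreeAlgebra k (Fin n) → FreeAlgebra k (Fin n) → Prop := fun a b =>
  ((∃ i j : Fin n, a = FreeAlgebra.ι k i * FreeAlgebra.ι k j +
      FreeAlgebra.ι k j * FreeAlgebra.ι k i) ∨
    (∃ i : Fin n, a = FreeAlgebra.ι k i * FreeAlgebra.ι k i)) ∧ b = 0

/-- The exterior algebra `E` on `e_1, …, e_n` over `k`: the quotient of the free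
associative `k`-algebra on `n` generators by the relations above. -/
abbrev ExtAlg := RingQuot (ExtRel k n)

/-- The augmentation `E → k` sending each generator `e_i` to `0`. -/
def extAug : ExtAlg k n →ₐ[k] k :=
  RingQuot.liftAlgHom k
    ⟨FreeAlgebra.lift k (fun _ : Fin n => (0 : k)), by
      rintro x y ⟨(⟨i, j, rfl⟩ | ⟨i, rfl⟩), rfl⟩ <;> simp⟩

end Exterior

/-!
The Hochschild complex of `A` with coefficients in `k` is the case `M = k` of the complex
`k ⊗[A] B(M)`, for `B(M)` the bar resolution of a left `A`-module `M`. Its homology vanishes in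
positive degrees for `M = A`, and it turns short exact sequences in `M` into long ones.

Upper bound: if `v ∉ span T`, then in the exterior algebra `E` the left ideal `I` generated by `T`
satisfies `x v ∈ I ↔ x ∈ I + E v`, so that `0 → E ⧸ (I + E v) → E ⧸ I → E ⧸ (I + E v) → 0` is exact.
Adding the basis vectors one at a time, the long exact sequences bound the ranks by the Pascal
recursion for `Nat.multichoose`.

Lower bound: symmetrized tensors in the `e_j` are cycles, products of the coordinate derivations
`E → k` are cocycles, and the two families pair to the identity matrix indexed by `Sym κ i`.
-/

universe u v

section BarComplex

open CategoryTheory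

variable {k : Type v} [CommRing k] {A : Type u} [Ring A] [Algebra k A] (ε : A →ₐ[k] k)
variable {M : Type u} [AddCommGroup M] [Module k M] [Module A M] [IsScalarTower k A M]

variable (k A M) in
/-- The module `A^{⊗ n} ⊗ M` of degree `n` of the bar complex, nested to the right. -/
def barTerm : ℕ → ModuleCat.{u} k
  | 0 => ModuleCat.of k M
  | n + 1 => ModuleCat.of k (A ⊗[k] barTerm n)

namespace barTerm

instance instModule : ∀ n, Module A (barTerm k A M n)
  | 0 => inferInstanceAs (Module A M)
  | n + 1 => inferInstanceAs (Module A (A ⊗[k] barTerm k A M n))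

instance instIsScalarTower : ∀ n, IsScalarTower k A (barTerm k A M n)
  | 0 => inferInstanceAs (IsScalarTower k A M)
  | n + 1 => inferInstanceAs (IsScalarTower k A (A ⊗[k] barTerm k A M n))

variable (k A M) in
/-- The identification of the degree `0` term with `M`. -/
def zeroEquiv : barTerm k A M 0 ≃ₗ[A] M := LinearEquiv.refl A M

/-- The pure tensor `a ⊗ x`, `A`-linear in `a` for the action on the leftmost factor. -/
def cons (n : ℕ) : A →ₗ[A] barTerm k A M n →ₗ[k] barTerm k A M (n + 1) :=
  TensorProduct.AlgebraTensorModule.mk k A A (barTerm k A M n)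

variable {n : ℕ}

theorem smul_cons (a b : A) (x : barTerm k A M n) : a • cons n b x = cons n (a * b) x := rfl

@[elab_as_elim]
protected theorem induction_on {p : barTerm k A M (n + 1) → Prop} (x : barTerm k A M (n + 1))
    (zero : p 0) (cons : ∀ a y, p (cons n a y)) (add : ∀ x y, p x → p y → p (x + y)) : p x :=
  TensorProduct.induction_on (motive := p) x zero cons add

theorem hom_ext {P : Type*} [AddCommGroup P] [Module k P] {f g : barTerm k A M (n + 1) →ₗ[k] P}
    (h : ∀ a x, f (cons n a x) = g (cons n a x)) : f = g :=
  TensorProduct.ext' h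

/-- The linear map `a ⊗ x ↦ f a x` given by a bilinear map. -/
protected def lift {P : Type*} [AddCommGroup P] [Module k P] (f : A →ₗ[k] barTerm k A M n →ₗ[k] P) :
    barTerm k A M (n + 1) →ₗ[k] P :=
  TensorProduct.lift f

variable {P : Type*} [AddCommGroup P] [Module k P] [Module A P] [IsScalarTower k A P]

/-- The `A`-linear extension `a ⊗ x ↦ a • f x` of a `k`-linear map. -/
def extend (f : barTerm k A M n →ₗ[k] P) : barTerm k A M (n + 1) →ₗ[A] P :=
  TensorProduct.AlgebraTensorModule.lift (LinearMap.toSpanSingleton A _ f)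

@[simp]
theorem extend_cons (f : barTerm k A M n →ₗ[k] P) (a : A) (x : barTerm k A M n) :
    extend f (cons n a x) = a • f x := rfl

end barTerm

open barTerm

variable (k A M) in
/-- The differential of the bar resolution `A ⊗ A^{⊗ •} ⊗ M → M`, where
`barTerm k A M (n + 1)` is its term of degree `n`. -/
def barDiff : ∀ n, barTerm k A M (n + 1) →ₗ[A] barTerm k A M n
  | 0 => extend .id
  | n + 1 => extend (.id - cons n 1 ∘ₗ (barDiff n).restrictScalars k)

theorem barDiff_zero_cons (a : A) (m : barTerm k A M 0) :
    barDiff k A M 0 (cons 0 a m) = a • m := rfl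

theorem barDiff_succ_cons {n : ℕ} (a : A) (x : barTerm k A M (n + 1)) :
    barDiff k A M (n + 1) (cons (n + 1) a x) = a • (x - cons n 1 (barDiff k A M n x)) := rfl

theorem barDiff_one_cons_barDiff : ∀ {n : ℕ} (x : barTerm k A M (n + 1)),
    barDiff k A M n (cons n 1 (barDiff k A M n x)) = barDiff k A M n x
  | 0, x => by rw [barDiff_zero_cons, one_smul]
  | n + 1, x => by
    have comp_eq_zero : barDiff k A M n (barDiff k A M (n + 1) x) = 0 := by
      induction x using barTerm.induction_on with
      | zero => simp only [map_zero]
      | cons a y =>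
        rw [barDiff_succ_cons, map_smul, map_sub, barDiff_one_cons_barDiff, sub_self, smul_zero]
      | add x y hx hy => simp only [map_add, hx, hy, add_zero]
    rw [barDiff_succ_cons, one_smul, comp_eq_zero, map_zero, sub_zero]

variable (M) in
/-- The augmentation `a ⊗ x ↦ ε a • x` of the leftmost tensor factor. -/
def barAug (n : ℕ) : barTerm k A M (n + 1) →ₗ[k] barTerm k A M n :=
  barTerm.lift (LinearMap.lsmul k _ ∘ₗ ε.toLinearMap)

theorem barAug_cons {n : ℕ} (a : A) (x : barTerm k A M n) :
    barAug ε M n (cons n a x) = ε a • x := rfl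

theorem barAug_smul {n : ℕ} (a : A) (x : barTerm k A M (n + 1)) :
    barAug ε M n (a • x) = ε a • barAug ε M n x := by
  induction x using barTerm.induction_on with
  | zero => simp only [smul_zero, map_zero]
  | cons b y => rw [smul_cons, barAug_cons, barAug_cons, map_mul, mul_smul]
  | add x y hx hy => simp only [smul_add, map_add, hx, hy]

variable (M) in
/-- The differential of the complex computing `Tor^A(k, M)`: the bar resolution of `M` has
degree `n` term `barTerm k A M (n + 1)`, and tensoring it with `k` over `A` along `ε` replaces
this by `barTerm k A M n`, at the cost of the extra summand `barAug`. -/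
def torDiff (n : ℕ) : barTerm k A M (n + 1) →ₗ[k] barTerm k A M n :=
  barAug ε M n - (barDiff k A M n).restrictScalars k

theorem torDiff_apply {n : ℕ} (x : barTerm k A M (n + 1)) :
    torDiff ε M n x = barAug ε M n x - barDiff k A M n x := rfl

theorem torDiff_comp_torDiff (n : ℕ) : torDiff ε M n ∘ₗ torDiff ε M (n + 1) = 0 := by
  refine hom_ext fun a x ↦ ?_
  simp only [LinearMap.comp_apply, LinearMap.zero_apply, torDiff_apply, barAug_cons,
    barDiff_succ_cons, map_sub, map_smul, barAug_smul, barDiff_one_cons_barDiff, one_smul, map_one,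
    sub_self, smul_zero, sub_zero]

variable (M) in
/-- The complex `k ⊗[A] B`, for `B` the bar resolution of the `A`-module `M` and `k` the right
`A`-module given by `ε`. -/
def torComplex : ChainComplex (ModuleCat.{u} k) ℕ :=
  ChainComplex.of (fun n ↦ .of k (barTerm k A M n)) (fun n ↦ ModuleCat.ofHom (torDiff ε M n))
    fun n ↦ by rw [← ModuleCat.ofHom_comp, torDiff_comp_torDiff, ModuleCat.ofHom_zero]

variable (M) in
theorem torComplex_d (n : ℕ) :
    (torComplex ε M).d (n + 1) n = ModuleCat.ofHom (torDiff ε M n) := by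
  simp only [torComplex, ChainComplex.of_d]

theorem torComplex_d_apply {n : ℕ} (x : barTerm k A M (n + 1)) :
    (torComplex ε M).d (n + 1) n x = torDiff ε M n x := by
  rw [torComplex_d]
  rfl

section Functoriality

variable {M' : Type u} [AddCommGroup M'] [Module k M'] [Module A M'] [IsScalarTower k A M']
variable {M'' : Type u} [AddCommGroup M''] [Module k M''] [Module A M''] [IsScalarTower k A M'']

/-- The map induced by `f` on the terms of the bar complex. -/
def barMap (f : M →ₗ[A] M') : ∀ n, barTerm k A M n →ₗ[A] barTerm k A M' n
  | 0 => f
  | n + 1 => TensorProduct.AlgebraTensorModule.lTensor A A ((barMap f n).restrictScalars k)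

theorem barMap_cons (f : M →ₗ[A] M') {n : ℕ} (a : A) (x : barTerm k A M n) :
    barMap f (n + 1) (cons n a x) = cons n a (barMap f n x) := rfl

theorem barMap_barAug (f : M →ₗ[A] M') {n : ℕ} (x : barTerm k A M (n + 1)) :
    barMap f n (barAug ε M n x) = barAug ε M' n (barMap f (n + 1) x) := by
  induction x using barTerm.induction_on with
  | zero => simp only [map_zero]
  | cons a y => rw [barMap_cons, barAug_cons, barAug_cons, LinearMap.map_smul_of_tower]
  | add x y hx hy => simp only [map_add, hx, hy]

theorem barMap_barDiff (f : M →ₗ[A] M') : ∀ {n : ℕ} (x : barTerm k A M (n + 1)),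
    barMap f n (barDiff k A M n x) = barDiff k A M' n (barMap f (n + 1) x)
  | n, x => by
    induction x using barTerm.induction_on with
    | zero => simp only [map_zero]
    | cons a y =>
      rw [barMap_cons]
      cases n with
      | zero => rw [barDiff_zero_cons, barDiff_zero_cons, map_smul]
      | succ n =>
        rw [barDiff_succ_cons, barDiff_succ_cons, map_smul, map_sub, barMap_cons, barMap_barDiff]
    | add x y hx hy => simp only [map_add, hx, hy]

/-- The chain map induced by `f`. -/
def torComplexMap (f : M →ₗ[A] M') : torComplex ε M ⟶ torComplex ε M' :=
  ChainComplex.ofHom (fun n ↦ ModuleCat.ofHom ((barMap f n).restrictScalars k)) fun n ↦ by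
    rw [torComplex_d, torComplex_d]
    ext x
    exact ((map_sub (barMap f n) _ _).trans
      (congrArg₂ _ (barMap_barAug ε f x) (barMap_barDiff f x))).symm

theorem barMap_injective [Module.Flat k A] {f : M →ₗ[A] M'} (hf : Function.Injective f) :
    ∀ n, Function.Injective (barMap (k := k) f n)
  | 0 => hf
  | n + 1 => Module.Flat.lTensor_preserves_injective_linearMap ((barMap f n).restrictScalars k)
      (barMap_injective hf n)

theorem barMap_surjective {f : M →ₗ[A] M'} (hf : Function.Surjective f) :
    ∀ n, Function.Surjective (barMap (k := k) f n)
  | 0 => hf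
  | n + 1 => LinearMap.lTensor_surjective A (g := (barMap f n).restrictScalars k)
      (barMap_surjective hf n)

theorem barMap_exact {f : M' →ₗ[A] M} {g : M →ₗ[A] M''} (hfg : Function.Exact f g)
    (hg : Function.Surjective g) : ∀ n, Function.Exact (barMap (k := k) f n) (barMap (k := k) g n)
  | 0 => hfg
  | n + 1 => lTensor_exact A (f := (barMap f n).restrictScalars k)
      (g := (barMap g n).restrictScalars k) (barMap_exact hfg hg n) (barMap_surjective hg n)

theorem torComplex_shortExact [Module.Flat k A] {f : M' →ₗ[A] M} {g : M →ₗ[A] M''}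
    (hf : Function.Injective f) (hfg : Function.Exact f g) (hg : Function.Surjective g) :
    ∃ h : torComplexMap ε f ≫ torComplexMap ε g = 0, (ShortComplex.mk _ _ h).ShortExact := by
  have comp_eq_zero : torComplexMap ε f ≫ torComplexMap ε g = 0 := by
    ext n x
    exact (barMap_exact hfg hg n).apply_apply_eq_zero x
  refine ⟨comp_eq_zero, HomologicalComplex.shortExact_of_degreewise_shortExact _ fun n ↦ ?_⟩
  exact ModuleCat.shortComplex_shortExact _ (barMap_exact (k := k) hfg hg n) (barMap_injective hf n)
      (barMap_surjective hg n)

end Functoriality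

variable (M) in
/-- The module `Tor_i^A(k, M)`, computed by the bar resolution. -/
abbrev torHomology (i : ℕ) : ModuleCat.{u} k :=
  (torComplex ε M).homology i

section Free

/-- The signed insertion of `1` in the last place,
`a₁ ⊗ ⋯ ⊗ aₙ ⊗ a ↦ (-1)ⁿ⁺¹ a₁ ⊗ ⋯ ⊗ aₙ ⊗ a ⊗ 1`. -/
def barContraction : ∀ n, barTerm k A A n →ₗ[A] barTerm k A A (n + 1)
  | 0 => -(LinearMap.toSpanSingleton A _ (cons 0 1 ((zeroEquiv k A A).symm 1)) ∘ₗ zeroEquiv k A A)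
  | n + 1 => extend (-cons (n + 1) 1 ∘ₗ (barContraction n).restrictScalars k)

theorem barContraction_cons {n : ℕ} (a : A) (x : barTerm k A A n) :
    barContraction (n + 1) (cons n a x) = -cons (n + 1) a (barContraction n x) := by
  simp only [barContraction, extend_cons, LinearMap.neg_apply, LinearMap.comp_apply,
    LinearMap.coe_restrictScalars, smul_neg, smul_cons, mul_one]

theorem barAug_barContraction {n : ℕ} (x : barTerm k A A (n + 1)) :
    barAug ε A (n + 1) (barContraction (n + 1) x) = -barContraction n (barAug ε A n x) := by
  induction x using barTerm.induction_on with
  | zero => simp only [map_zero, neg_zero]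
  | cons a y =>
    rw [barContraction_cons, map_neg, barAug_cons, barAug_cons, LinearMap.map_smul_of_tower]
  | add x y hx hy => simp only [map_add, hx, hy, neg_add]

theorem barDiff_barContraction_zero (x : barTerm k A A 0) :
    barDiff k A A 0 (barContraction 0 x) = -x := by
  simp only [barContraction, LinearMap.neg_apply, LinearMap.comp_apply, map_neg,
    LinearEquiv.coe_coe, LinearMap.toSpanSingleton_apply, map_smul, barDiff_zero_cons, one_smul]
  rw [← map_smul, smul_eq_mul, mul_one, LinearEquiv.symm_apply_apply]

theorem barDiff_barContraction : ∀ {n : ℕ} (x : barTerm k A A (n + 1)),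
    barDiff k A A (n + 1) (barContraction (n + 1) x) =
      -barContraction n (barDiff k A A n x) - x
  | n, x => by
    induction x using barTerm.induction_on with
    | zero => simp only [map_zero, neg_zero, sub_zero]
    | cons a y =>
      rw [barContraction_cons, map_neg, barDiff_succ_cons]
      cases n with
      | zero =>
        rw [barDiff_barContraction_zero, barDiff_zero_cons, map_smul]
        simp only [map_neg, smul_sub, smul_neg, smul_cons, mul_one]
        abel
      | succ n =>
        rw [barDiff_barContraction, barDiff_succ_cons]
        simp only [map_sub, map_neg, map_smul, barContraction_cons, smul_sub, smul_neg, smul_cons,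
          mul_one]
        abel
    | add x y hx hy => simp only [map_add, hx, hy]; abel

theorem torDiff_barContraction_of_torDiff_eq_zero {n : ℕ} {x : barTerm k A A (n + 1)}
    (hx : torDiff ε A n x = 0) : torDiff ε A (n + 1) (barContraction (n + 1) x) = x := by
  rw [torDiff_apply, sub_eq_zero] at hx
  rw [torDiff_apply, barAug_barContraction, barDiff_barContraction, hx, sub_sub_cancel]

theorem torComplex_self_exactAt_succ (n : ℕ) : (torComplex ε A).ExactAt (n + 1) := by
  rw [HomologicalComplex.exactAt_iff' _ (n + 2) (n + 1) n (by simp) (by simp),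
    ShortComplex.moduleCat_exact_iff]
  intro x hx
  exact ⟨barContraction (n + 1) x, (torComplex_d_apply ε _).trans <|
    torDiff_barContraction_of_torDiff_eq_zero ε <| (torComplex_d_apply ε x).symm.trans hx⟩

end Free

end BarComplex

section RankBounds

open CategoryTheory barTerm

variable {k : Type v} [Field k]

theorem rank_le_of_shortComplex_exact {S : ShortComplex (ModuleCat.{u} k)} (hS : S.Exact) :
    Module.rank k S.X₂ ≤ Module.rank k S.X₁ + Module.rank k S.X₃ := by
  rw [← LinearMap.rank_range_add_rank_ker S.g.hom, ← hS.moduleCat_range_eq_ker, add_comm]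
  exact add_le_add (rank_range_le _) (Submodule.rank_le _)

variable {A : Type u} [Ring A] [Algebra k A] (ε : A →ₐ[k] k)
variable {M : Type u} [AddCommGroup M] [Module k M] [Module A M] [IsScalarTower k A M]
variable {M' : Type u} [AddCommGroup M'] [Module k M'] [Module A M'] [IsScalarTower k A M']
variable {M'' : Type u} [AddCommGroup M''] [Module k M''] [Module A M''] [IsScalarTower k A M'']

theorem rank_torHomology_succ_le {f : M' →ₗ[A] M} {g : M →ₗ[A] M''}
    (hf : Function.Injective f) (hfg : Function.Exact f g) (hg : Function.Surjective g) (i : ℕ) :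
    Module.rank k (torHomology ε M'' (i + 1)) ≤
      Module.rank k (torHomology ε M (i + 1)) + Module.rank k (torHomology ε M' i) := by
  obtain ⟨h, hS⟩ := torComplex_shortExact ε hf hfg hg
  exact rank_le_of_shortComplex_exact (hS.homology_exact₃ (i + 1) i (by simp))

theorem rank_torHomology_self_succ (i : ℕ) :
    Module.rank k (torHomology ε A (i + 1)) = 0 :=
  have := ModuleCat.subsingleton_of_isZero
    ((torComplex ε A).exactAt_iff_isZero_homology (i + 1) |>.1 (torComplex_self_exactAt_succ ε i))
  rank_subsingleton' k _

theorem rank_torHomology_zero_le_one {m : M} (hm : ∀ x : M, ∃ a : A, a • m = x) :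
    Module.rank k (torHomology ε M 0) ≤ 1 := by
  let toH := (torComplex ε M).pOpcycles 0 ≫ (torComplex ε M).isoHomologyι₀.inv
  let proj : barTerm k A M 0 →ₗ[k] torHomology ε M 0 := toH.hom
  have proj_surjective : Function.Surjective proj :=
    (ModuleCat.epi_iff_surjective toH).1 inferInstance
  have proj_torDiff (x) : proj (torDiff ε M 0 x) = 0 := by
    have : (torComplex ε M).d 1 0 ≫ toH = 0 := by
      rw [HomologicalComplex.d_pOpcycles_assoc, Limits.zero_comp]
    rw [← torComplex_d_apply]
    exact DFunLike.congr_fun (congrArg ModuleCat.Hom.hom this) x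
  let m₀ := (zeroEquiv k A M).symm m
  refine rank_le_one (proj m₀) fun y ↦ ?_
  obtain ⟨x, rfl⟩ := proj_surjective y
  obtain ⟨a, ha⟩ := hm (zeroEquiv k A M x)
  have hx : x = a • m₀ := by rw [← map_smul, ha, LinearEquiv.symm_apply_apply]
  refine ⟨ε a, ?_⟩
  rw [hx, ← map_smul, ← sub_eq_zero, ← map_sub]
  exact proj_torDiff (cons 0 a m₀)

theorem rank_torHomology_congr (e : M ≃ₗ[A] M') (i : ℕ) :
    Module.rank k (torHomology ε M i) = Module.rank k (torHomology ε M' i) := by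
  have (n : ℕ) : IsIso ((torComplexMap ε e.toLinearMap).f n) :=
    (ConcreteCategory.isIso_iff_bijective _).2
      ⟨barMap_injective e.injective n, barMap_surjective e.surjective n⟩
  have := HomologicalComplex.Hom.isIso_of_components (torComplexMap ε e.toLinearMap)
  exact (asIso (HomologicalComplex.homologyMap (torComplexMap ε e.toLinearMap)
    i)).toLinearEquiv.rank_eq

/-- The long exact sequence of `0 → A ⧸ (I : a) → A ⧸ I → A ⧸ (I + A a) → 0`. -/
theorem rank_torHomology_quotient_sup_span_le {I J : Ideal A} {a : A}
    (hJ : ∀ x, x * a ∈ I ↔ x ∈ J) (i : ℕ) :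
    Module.rank k (torHomology ε (A ⧸ (I ⊔ Ideal.span {a})) (i + 1)) ≤
      Module.rank k (torHomology ε (A ⧸ I) (i + 1)) +
        Module.rank k (torHomology ε (A ⧸ J) i) := by
  let f : (A ⧸ J) →ₗ[A] A ⧸ I :=
    J.mapQ I (LinearMap.toSpanSingleton A A a) fun x hx ↦ (hJ x).2 hx
  let g : (A ⧸ I) →ₗ[A] A ⧸ (I ⊔ Ideal.span {a}) := Submodule.factor le_sup_left
  have hf : Function.Injective f := by
    rw [injective_iff_map_eq_zero]
    rintro ⟨x⟩ hx
    exact (Submodule.Quotient.mk_eq_zero J).2 <|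
      (hJ x).1 ((Submodule.Quotient.mk_eq_zero I).1 hx)
  have hfg : Function.Exact f g := by
    rintro ⟨x⟩
    refine (Submodule.Quotient.mk_eq_zero _).trans ⟨fun hx ↦ ?_, ?_⟩
    · obtain ⟨y, hy, _, hz, rfl⟩ := Submodule.mem_sup.1 hx
      obtain ⟨b, rfl⟩ := Submodule.mem_span_singleton.1 hz
      refine ⟨Submodule.Quotient.mk b, (Submodule.Quotient.eq _).2 ?_⟩
      simpa using hy
    · rintro ⟨⟨b⟩, hb⟩
      have hI : b • a - x ∈ I := (Submodule.Quotient.eq I).1 hb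
      rw [← sub_sub_cancel (b • a) x]
      exact sub_mem (Submodule.mem_sup_right (Submodule.smul_mem _ _
        (Submodule.mem_span_singleton_self a))) (Submodule.mem_sup_left hI)
  exact rank_torHomology_succ_le ε hf hfg (Submodule.factor_surjective _) i

end RankBounds

section ExteriorIdeals

open ExteriorAlgebra
open CliffordAlgebra (contractRight contractRight_mul_ι)

variable {k : Type*} [CommRing k] {V : Type*} [AddCommGroup V] [Module k V]

theorem algebraMapInv_ι (v : V) : algebraMapInv (ι k v) = 0 := by
  simp [algebraMapInv]

theorem contractRight_mem_span_ι {T : Set V} {d : Module.Dual k V} (hd : ∀ t ∈ T, d t = 0)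
    {x : ExteriorAlgebra k V} (hx : x ∈ Ideal.span (ι k '' T)) :
    contractRight x d ∈ Ideal.span (ι k '' T) := by
  induction hx using Submodule.closure_induction with
  | zero => rw [map_zero, LinearMap.zero_apply]; exact zero_mem _
  | add x y _ _ hx hy => rw [map_add, LinearMap.add_apply]; exact add_mem hx hy
  | smul_mem y _ ht =>
    obtain ⟨t, ht, rfl⟩ := ht
    rw [smul_eq_mul, contractRight_mul_ι, hd t ht, zero_smul, zero_sub]
    exact neg_mem (Ideal.mul_mem_left _ _ (Ideal.subset_span ⟨t, ht, rfl⟩))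

theorem mul_ι_mem_span_ι_iff {T : Set V} {v : V} {d : Module.Dual k V} (hv : d v = 1)
    (hd : ∀ t ∈ T, d t = 0) (x : ExteriorAlgebra k V) :
    x * ι k v ∈ Ideal.span (ι k '' T) ↔ x ∈ Ideal.span (ι k '' insert v T) := by
  constructor <;> intro hx
  · have contract_eq : contractRight (x * ι k v) d = x - contractRight x d * ι k v := by
      rw [contractRight_mul_ι, hv, one_smul]
    rw [← sub_add_cancel x (contractRight x d * ι k v), ← contract_eq]
    exact add_mem
      (Ideal.span_mono (Set.image_mono (Set.subset_insert v T)) (contractRight_mem_span_ι hd hx))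
      (Ideal.mul_mem_left _ _ (Ideal.subset_span ⟨v, Set.mem_insert v T, rfl⟩))
  · induction hx using Submodule.closure_induction with
    | zero => rw [zero_mul]; exact zero_mem _
    | add x y _ _ hx hy => rw [add_mul]; exact add_mem hx hy
    | smul_mem y _ hw =>
      obtain ⟨w, rfl | hw, rfl⟩ := hw
      · rw [smul_mul_assoc, ι_sq_zero, smul_zero]
        exact zero_mem _
      · rw [smul_mul_assoc, eq_neg_of_add_eq_zero_left (ι_add_mul_swap w v)]
        exact Submodule.smul_mem _ _
          (neg_mem (Ideal.mul_mem_left _ _ (Ideal.subset_span ⟨w, hw, rfl⟩)))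

theorem ι_mem_span_ι {T : Set V} {w : V} (hw : w ∈ Submodule.span k T) :
    ι k w ∈ Ideal.span (ι k '' T) := by
  induction hw using Submodule.span_induction with
  | mem w hw => exact Ideal.subset_span ⟨w, hw, rfl⟩
  | zero => rw [map_zero]; exact zero_mem _
  | add v w _ _ hv hw => rw [map_add]; exact add_mem hv hw
  | smul c w _ hw => rw [map_smul]; exact Submodule.smul_of_tower_mem _ c hw

theorem sub_algebraMapInv_mem_span_ι {T : Set V} (hT : Submodule.span k T = ⊤)
    (x : ExteriorAlgebra k V) :
    x - algebraMap k _ (algebraMapInv x) ∈ Ideal.span (ι k '' T) := by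
  induction x using ExteriorAlgebra.induction with
  | algebraMap r => rw [AlgHom.commutes, Algebra.algebraMap_self_apply, sub_self]; exact zero_mem _
  | ι w =>
    have hw : ι k w ∈ Ideal.span (ι k '' T) := ι_mem_span_ι (hT ▸ Submodule.mem_top)
    rwa [algebraMapInv_ι, map_zero, sub_zero]
  | mul x y hx hy =>
    have mul_sub_eq : x * y - algebraMap k _ (algebraMapInv (x * y)) =
        x * (y - algebraMap k _ (algebraMapInv y)) +
          algebraMap k _ (algebraMapInv y) * (x - algebraMap k _ (algebraMapInv x)) := by
      rw [map_mul algebraMapInv, map_mul (algebraMap k _), mul_sub, mul_sub,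
        ← Algebra.commutes (algebraMapInv y) x, sub_add_sub_cancel,
        Algebra.commutes (algebraMapInv y) (algebraMap k _ (algebraMapInv x))]
    rw [mul_sub_eq]
    exact add_mem (Ideal.mul_mem_left _ _ hy) (Ideal.mul_mem_left _ _ hx)
  | add x y hx hy =>
    rw [map_add, map_add, add_sub_add_comm]
    exact add_mem hx hy

theorem span_ι_eq_ker_algebraMapInv {T : Set V} (hT : Submodule.span k T = ⊤) :
    Ideal.span (ι k '' T) = RingHom.ker (algebraMapInv (R := k) (M := V)) := by
  apply le_antisymm
  · rw [Ideal.span_le]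
    rintro _ ⟨w, -, rfl⟩
    exact algebraMapInv_ι w
  · intro x hx
    rw [RingHom.mem_ker] at hx
    simpa only [hx, map_zero, sub_zero] using sub_algebraMapInv_mem_span_ι hT x

end ExteriorIdeals

section PascalRecursion

open ExteriorAlgebra

variable {k : Type v} [Field k] {V : Type u} [AddCommGroup V] [Module k V]
variable {κ : Type*} (b : Module.Basis κ k V)

theorem rank_torHomology_quotient_span_ι_le (s : Finset κ) (i : ℕ) :
    Module.rank k (torHomology (algebraMapInv (R := k) (M := V))
      (ExteriorAlgebra k V ⧸ Ideal.span (ι k '' (b '' s))) i) ≤ Nat.multichoose s.card i := by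
  classical
  induction i generalizing s with
  | zero =>
    rw [Nat.multichoose_zero_right, Nat.cast_one]
    exact rank_torHomology_zero_le_one _ (m := Submodule.Quotient.mk 1) fun x ↦ by
      obtain ⟨y, rfl⟩ := Submodule.Quotient.mk_surjective _ x
      exact ⟨y, by rw [← Submodule.Quotient.mk_smul, smul_eq_mul, mul_one]⟩
  | succ i ih =>
    induction s using Finset.induction_on with
    | empty =>
      let e := Submodule.quotEquivOfEqBot (Ideal.span (ι k '' (b '' (∅ : Finset κ)))) (by simp)
      rw [rank_torHomology_congr _ e, rank_torHomology_self_succ]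
      exact zero_le
    | insert j s hj ihs =>
      have coord_eq_zero : ∀ t ∈ b '' s, b.coord j t = 0 := by
        rintro _ ⟨l, hl, rfl⟩
        rw [b.coord_apply, b.repr_self, Finsupp.single_eq_of_ne (by rintro rfl; exact hj hl)]
      have mul_mem_iff := mul_ι_mem_span_ι_iff (v := b j) (by simp) coord_eq_zero
      have image_insert : b '' (insert j s : Finset κ) = insert (b j) (b '' s) := by
        rw [Finset.coe_insert, Set.image_insert_eq]
      have span_insert : Ideal.span (ι k '' insert (b j) (b '' s)) =
          Ideal.span (ι k '' (b '' s)) ⊔ Ideal.span {ι k (b j)} := by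
        rw [Set.image_insert_eq, Ideal.span_insert, sup_comm]
      have quotient_le := ih (insert j s)
      rw [Finset.card_insert_of_notMem hj, image_insert] at quotient_le ⊢
      rw [Nat.multichoose_succ_succ, Nat.cast_add]
      have := rank_torHomology_quotient_sup_span_le (algebraMapInv (R := k)) mul_mem_iff i
      rw [← span_insert] at this
      exact this.trans (add_le_add ihs quotient_le)

end PascalRecursion

section SymmetricCycles

open CategoryTheory barTerm

theorem sum_sum_eq_zero_of_alternating {κ G : Type*} [Fintype κ] [AddCommGroup G]
    {f : κ → κ → G} (hf : ∀ i, f i i = 0) (hf' : ∀ i j, f i j + f j i = 0) :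
    ∑ i, ∑ j, f i j = 0 := by
  rw [← Fintype.sum_prod_type']
  exact Finset.sum_involution (fun p _ ↦ p.swap) (fun p _ ↦ hf' p.1 p.2)
    (fun ⟨i, j⟩ _ hij heq ↦ hij (by obtain rfl : j = i := congrArg Prod.fst heq; exact hf j))
    (fun _ _ ↦ Finset.mem_univ _) (fun _ _ ↦ Prod.swap_swap _)

theorem card_le_rank_homology_of_dual {k : Type v} [Field k] (S : ShortComplex (ModuleCat.{u} k))
    {κ : Type*} [Fintype κ] {z : κ → S.X₂} {L : κ → Module.Dual k S.X₂}
    (hz : ∀ s, S.g (z s) = 0) (hL : ∀ s x, L s (S.f x) = 0) (hLz : ∀ s, L s (z s) = 1)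
    (hLz' : Pairwise fun s t ↦ L s (z t) = 0) :
    (Fintype.card κ : Cardinal) ≤ Module.rank k S.homology := by
  let H := LinearMap.ker S.g.hom ⧸ LinearMap.range S.moduleCatToCycles
  let cls (s : κ) : H := Submodule.Quotient.mk ⟨z s, hz s⟩
  let eval (s : κ) : Module.Dual k H :=
    Submodule.liftQ _ (L s ∘ₗ (LinearMap.ker S.g.hom).subtype) <| by
      rintro _ ⟨x, rfl⟩
      exact hL s x
  have cls_linearIndependent : LinearIndependent k cls :=
    .of_pairwise_dual_eq_zero_one cls eval hLz' hLz
  calc (Fintype.card κ : Cardinal) ≤ Module.rank k H := Cardinal.nat_le_lift_iff.1 <| by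
        simpa only [Cardinal.mk_fintype, Cardinal.lift_natCast]
          using cls_linearIndependent.cardinal_lift_le_rank
    _ = Module.rank k S.homology := S.moduleCatHomologyIso.toLinearEquiv.rank_eq.symm

variable {k : Type v} [CommRing k] {A : Type u} [Ring A] [Algebra k A] (ε : A →ₐ[k] k)
variable {M : Type u} [AddCommGroup M] [Module k M] [Module A M] [IsScalarTower k A M]
variable {κ : Type*}

section

variable [Fintype κ] (e : κ → A) (m : M)

/-- The sum of `c [a₁, …, aᵢ] • e a₁ ⊗ ⋯ ⊗ e aᵢ ⊗ m` over all words `a₁ ⋯ aᵢ`. -/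
def symCycle : ∀ i, (Sym κ i → k) → barTerm k A M i
  | 0, c => (zeroEquiv k A M).symm (c .nil • m)
  | i + 1, c => ∑ a, cons i (e a) (symCycle i fun s ↦ c (a ::ₛ s))

variable {e m}

theorem barAug_symCycle (hεe : ∀ a, ε (e a) = 0) {i : ℕ} (c : Sym κ (i + 1) → k) :
    barAug ε M i (symCycle e m (i + 1) c) = 0 := by
  simp only [symCycle, map_sum, barAug_cons, hεe, zero_smul, Finset.sum_const_zero]

theorem barDiff_symCycle (he : ∀ a, e a * e a = 0) (he' : ∀ a b, e a * e b + e b * e a = 0)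
    (hm : ∀ a, e a • m = 0) : ∀ {i : ℕ} (c : Sym κ (i + 1) → k),
    barDiff k A M i (symCycle e m (i + 1) c) = 0
  | 0, c => by
    rw [symCycle, map_sum]
    refine Finset.sum_eq_zero fun a _ ↦ ?_
    rw [barDiff_zero_cons, symCycle, ← map_smul, smul_comm, hm, smul_zero, map_zero]
  | i + 1, c => by
    rw [symCycle, map_sum]
    simp only [barDiff_succ_cons, barDiff_symCycle he he' hm, map_zero, sub_zero]
    simp only [symCycle, Finset.smul_sum, smul_cons]
    refine sum_sum_eq_zero_of_alternating (fun a ↦ ?_) fun a b ↦ ?_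
    · rw [he, map_zero, LinearMap.zero_apply]
    · simp only [Sym.cons_swap b a]
      rw [← LinearMap.add_apply, ← map_add, he', map_zero, LinearMap.zero_apply]

end

variable (δ : κ → A →ₗ[k] k) (φ : M →ₗ[k] k)

/-- The functional `a₁ ⊗ ⋯ ⊗ aᵢ ⊗ m ↦ δ w₁ a₁ * ⋯ * δ wᵢ aᵢ * φ m` of a word `w`. -/
def wordCocycle : ∀ {i : ℕ}, List.Vector κ i → barTerm k A M i →ₗ[k] k
  | 0, _ => φ ∘ₗ (zeroEquiv k A M).toLinearMap.restrictScalars k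
  | _ + 1, w => barTerm.lift ((LinearMap.mul k k).compl₁₂ (δ w.head) (wordCocycle w.tail))

variable {δ φ}

theorem wordCocycle_cons {i : ℕ} (w : List.Vector κ (i + 1)) (a : A) (x : barTerm k A M i) :
    wordCocycle δ φ w (cons i a x) = δ w.head a * wordCocycle δ φ w.tail x := rfl

theorem wordCocycle_smul (hδ : ∀ j a b, δ j (a * b) = ε a * δ j b + δ j a * ε b) {i : ℕ}
    (w : List.Vector κ (i + 1)) (a : A) (x : barTerm k A M (i + 1)) :
    wordCocycle δ φ w (a • x) =
      ε a * wordCocycle δ φ w x + δ w.head a * wordCocycle δ φ w.tail (barAug ε M i x) := by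
  induction x using barTerm.induction_on with
  | zero => simp only [smul_zero, map_zero, mul_zero, add_zero]
  | cons b y =>
    rw [smul_cons, wordCocycle_cons, wordCocycle_cons, barAug_cons, hδ, map_smul, smul_eq_mul]
    ring
  | add x y hx hy => simp only [smul_add, map_add, hx, hy]; ring

theorem wordCocycle_torDiff (hδ : ∀ j a b, δ j (a * b) = ε a * δ j b + δ j a * ε b)
    (hφ : ∀ a x, φ (a • x) = ε a * φ x) : ∀ {i : ℕ} (w : List.Vector κ i)
    (x : barTerm k A M (i + 1)), wordCocycle δ φ w (torDiff ε M i x) = 0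
  | i, w, x => by
    induction x using barTerm.induction_on with
    | zero => simp only [map_zero]
    | cons a y =>
      rw [torDiff_apply, barAug_cons]
      cases i with
      | zero =>
        rw [barDiff_zero_cons, map_sub, map_smul, sub_eq_zero]
        exact (hφ a y).symm
      | succ i =>
        have δ_one (j) : δ j 1 = 0 := by simpa using hδ j 1 1
        have ih : wordCocycle δ φ w.tail (torDiff ε M i y) = 0 := wordCocycle_torDiff hδ hφ w.tail y
        rw [torDiff_apply] at ih
        rw [barDiff_succ_cons, map_sub, wordCocycle_smul ε hδ, map_sub, wordCocycle_cons, δ_one,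
          map_sub (barAug ε M i), barAug_cons, map_one, one_smul, ih, map_smul, smul_eq_mul]
        ring
    | add x y hx hy => simp only [map_add, hx, hy, add_zero]

theorem wordCocycle_symCycle [Fintype κ] [DecidableEq κ] {e : κ → A} {m : M}
    (hδe : ∀ j a, δ j (e a) = if a = j then 1 else 0)
    (hφm : φ m = 1) : ∀ {i : ℕ} (w : List.Vector κ i) (c : Sym κ i → k),
    wordCocycle δ φ w (symCycle e m i c) = c (Sym.ofVector w)
  | 0, w, c => by
    obtain rfl := w.eq_nil
    simp [wordCocycle, symCycle, hφm]
  | i + 1, w, c => by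
    obtain ⟨j, w, rfl⟩ := w.exists_eq_cons
    simp [symCycle, wordCocycle_cons, hδe, wordCocycle_symCycle hδe hφm]

theorem multichoose_le_rank_torHomology {k : Type v} [Field k] {A : Type u} [Ring A] [Algebra k A]
    (ε : A →ₐ[k] k) {M : Type u} [AddCommGroup M] [Module k M] [Module A M] [IsScalarTower k A M]
    {κ : Type*} [Fintype κ] [DecidableEq κ] {e : κ → A} {m : M} {δ : κ → A →ₗ[k] k} {φ : M →ₗ[k] k}
    (he : ∀ a, e a * e a = 0) (he' : ∀ a b, e a * e b + e b * e a = 0)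
    (hεe : ∀ a, ε (e a) = 0) (hm : ∀ a, e a • m = 0)
    (hδ : ∀ j a b, δ j (a * b) = ε a * δ j b + δ j a * ε b)
    (hδe : ∀ j a, δ j (e a) = if a = j then 1 else 0)
    (hφ : ∀ a x, φ (a • x) = ε a * φ x) (hφm : φ m = 1) (i : ℕ) :
    Nat.multichoose (Fintype.card κ) i ≤ Module.rank k (torHomology ε M i) := by
  have exists_word (s : Sym κ i) : ∃ w : List.Vector κ i, Sym.ofVector w = s :=
    ⟨⟨s.1.toList, by rw [Multiset.length_toList, s.2]⟩, Subtype.ext (Multiset.coe_toList _)⟩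
  have d_symCycle (s : Sym κ i) (j) :
      (torComplex ε M).d i j (symCycle e m i (Pi.single s 1)) = 0 := by
    by_cases hij : j + 1 = i
    · subst hij
      refine (torComplex_d_apply ε _).trans ?_
      rw [torDiff_apply, barAug_symCycle ε hεe, barDiff_symCycle he he' hm]
      exact sub_zero 0
    · rw [HomologicalComplex.shape _ _ _ hij]
      rfl
  have wordCocycle_d (w : List.Vector κ i) (j) (x : (torComplex ε M).X j) :
      wordCocycle δ φ w ((torComplex ε M).d j i x) = 0 := by
    by_cases hij : i + 1 = j
    · subst hij
      exact (congrArg _ (torComplex_d_apply ε x)).trans (wordCocycle_torDiff ε hδ hφ w x)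
    · rw [HomologicalComplex.shape _ _ _ hij]
      exact map_zero _
  choose word hword using exists_word
  rw [← Sym.card_sym_eq_multichoose]
  refine card_le_rank_homology_of_dual ((torComplex ε M).sc i)
    (z := fun s ↦ symCycle e m i (Pi.single s 1)) (L := fun s ↦ wordCocycle δ φ (word s))
    (fun s ↦ d_symCycle s _) (fun s x ↦ wordCocycle_d (word s) _ x) (fun s ↦ ?_) fun s t hst ↦ ?_
  · exact (wordCocycle_symCycle hδe hφm _ _).trans (by rw [hword, Pi.single_eq_same])
  · exact (wordCocycle_symCycle hδe hφm _ _).trans (by rw [hword, Pi.single_eq_of_ne hst])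

end SymmetricCycles

section ResidueField

variable {k : Type v} [Field k] {A : Type u} [Ring A] [Algebra k A] (ε : A →ₐ[k] k)

/-- The identification with `k` of the quotient of `A` by the augmentation ideal. -/
def quotientAugmentationEquiv : (A ⧸ RingHom.ker ε) ≃ₗ[k] k :=
  (Ideal.quotientKerAlgEquivOfSurjective (f := ε)
    fun c ↦ ⟨algebraMap k A c, ε.commutes c⟩).toLinearEquiv

theorem quotientAugmentationEquiv_smul (a : A) (x : A ⧸ RingHom.ker ε) :
    quotientAugmentationEquiv ε (a • x) = ε a * quotientAugmentationEquiv ε x := by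
  obtain ⟨b, rfl⟩ := Submodule.Quotient.mk_surjective _ x
  exact map_mul ε a b

end ResidueField

section Comparison

open CategoryTheory barTerm

variable {k : Type} [Field k] {A : Type} [Ring A] [Algebra k A] (ε : A →ₐ[k] k)

theorem rank_hH_zero : Module.rank k (hH k A ε 0) = 1 :=
  (Submodule.quotEquivOfEqBot (LinearMap.range (hDelta k A ε 0)) LinearMap.range_zero).rank_eq.trans
    (Module.rank_self k)

/-- The map `x ↦ a ⊗ x` between terms of the Hochschild complex. -/
def hCons (n : ℕ) (a : A) : hW k A n →ₗ[k] hW k A (n + 1) :=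
  TensorProduct.mk k A (hW k A n) a

theorem hDelta_hCons_hCons {n : ℕ} (a b : A) (x : hW k A n) :
    hDelta k A ε (n + 1) (hCons (n + 1) a (hCons n b x)) =
      ε a • hCons n b x - hCons n (a * b) x - hCons n a (hDelta k A ε n (hCons n b x)) +
        hCons n a (ε b • x) := rfl

variable {B : Type} [Ring B] [Algebra k B] (θ : B ≃ₐ[k] A)
variable {M : Type} [AddCommGroup M] [Module k M] [Module B M] [IsScalarTower k B M]
variable (φ : M ≃ₗ[k] k)

/-- The identification of the terms of the bar complex of `M ≅ k` with those of the Hochschild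
complex. -/
def barTermEquivHW : ∀ n, barTerm k B M n ≃ₗ[k] hW k A n
  | 0 => (zeroEquiv k B M).restrictScalars k ≪≫ₗ φ
  | n + 1 => TensorProduct.congr θ.toLinearEquiv (barTermEquivHW n)

theorem barTermEquivHW_cons {n : ℕ} (b : B) (x : barTerm k B M n) :
    barTermEquivHW θ φ (n + 1) (cons n b x) = hCons n (θ b) (barTermEquivHW θ φ n x) := rfl

variable {φ}

theorem hDelta_barTermEquivHW (hφ : ∀ b x, φ (b • x) = ε (θ b) * φ x) :
    ∀ {n : ℕ} (x : barTerm k B M (n + 1)), hDelta k A ε n (barTermEquivHW θ φ (n + 1) x) =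
      barTermEquivHW θ φ n (torDiff (ε.comp θ) M n x)
  | 0, x => by
    induction x using barTerm.induction_on with
    | zero => simp only [map_zero]
    | cons b y =>
      rw [torDiff_apply, barAug_cons, barDiff_zero_cons, map_sub, map_smul, eq_comm]
      exact sub_eq_zero.2 (hφ b y).symm
    | add x y hx hy => simp only [map_add, hx, hy]
  | n + 1, x => by
    induction x using barTerm.induction_on with
    | zero => simp only [map_zero]
    | cons b y =>
      induction y using barTerm.induction_on with
      | zero => simp only [map_zero]
      | cons c z =>
        have ih := hDelta_barTermEquivHW hφ (cons n c z)
        rw [barTermEquivHW_cons] at ih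
        simp only [barTermEquivHW_cons, hDelta_hCons_hCons, ih, torDiff_apply, barAug_cons,
          barDiff_succ_cons, map_sub, map_smul, smul_sub, smul_cons, mul_one, map_mul,
          AlgHom.comp_apply, AlgEquiv.coe_toAlgHom]
        abel
      | add x y hx hy => simp only [map_add, hx, hy]
    | add x y hx hy => simp only [map_add, hx, hy]

variable (A) in
theorem hDelta_comp_hDelta (n : ℕ) : hDelta k A ε n ∘ₗ hDelta k A ε (n + 1) = 0 := by
  let T := barTermEquivHW (.refl : A ≃ₐ[k] A) (quotientAugmentationEquiv ε)
  have hDelta_T {i : ℕ} (x) : hDelta k A ε i (T (i + 1) x) = T i (torDiff ε _ i x) :=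
    hDelta_barTermEquivHW ε .refl (quotientAugmentationEquiv_smul ε) x
  refine LinearMap.ext ((T (n + 2)).surjective.forall.2 fun x ↦ ?_)
  rw [LinearMap.comp_apply, hDelta_T, hDelta_T, ← LinearMap.comp_apply (torDiff _ _ n),
    torDiff_comp_torDiff, LinearMap.zero_apply, map_zero, LinearMap.zero_apply]

variable {ε θ} in
theorem rank_hH_succ {ε' : B →ₐ[k] k} (hε : ε.comp (θ : B →ₐ[k] A) = ε')
    (hφ : ∀ b x, φ (b • x) = ε' b * φ x) (i : ℕ) :
    Module.rank k (hH k A ε (i + 1)) = Module.rank k (torHomology ε' M (i + 1)) := by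
  subst hε
  let K := torComplex (ε.comp (θ : B →ₐ[k] A)) M
  let d (n) : hW k A (n + 1) ⟶ hW k A n := ModuleCat.ofHom (hDelta k A ε n)
  let T (n) : K.X n ≅ hW k A n := (barTermEquivHW θ φ n).toModuleIso
  have T_comm (n) : (T (n + 1)).hom ≫ d n = K.d (n + 1) n ≫ (T n).hom := by
    rw [torComplex_d]
    ext x
    exact hDelta_barTermEquivHW ε θ hφ x
  let S : ShortComplex (ModuleCat k) :=
    .mk (d (i + 1)) (d i) (ModuleCat.hom_ext (hDelta_comp_hDelta A ε i))
  let e : K.sc' (i + 2) (i + 1) i ≅ S :=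
    ShortComplex.isoMk (T (i + 2)) (T (i + 1)) (T i) (T_comm (i + 1)) (T_comm i)
  let eH : K.homology (i + 1) ≅ S.moduleCatLeftHomologyData.H :=
    ShortComplex.homologyMapIso
      (K.isoSc' (i + 2) (i + 1) i (by simp) (by simp) ≪≫ e) ≪≫
      S.moduleCatHomologyIso
  rw [eH.toLinearEquiv.rank_eq]
  exact (Submodule.quotEquivOfEq _ _ (LinearMap.range_codRestrict _ _ _).symm).rank_eq

end Comparison

section ExteriorTor

open ExteriorAlgebra

theorem ιInv_mul {k : Type*} [CommRing k] {V : Type*} [AddCommGroup V] [Module k V]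
    (x y : ExteriorAlgebra k V) :
    ιInv (x * y) = algebraMapInv x • ιInv y + algebraMapInv y • ιInv x := by
  let : Module kᵐᵒᵖ V := Module.compHom _ ((RingHom.id k).fromOpposite mul_comm)
  have : IsCentralScalar k V := ⟨fun r m ↦ rfl⟩
  have fst_eq : (TrivSqZeroExt.fstHom k k V).comp toTrivSqZeroExt = algebraMapInv := by
    ext v
    simp [algebraMapInv]
  rw [← fst_eq]
  exact (congrArg TrivSqZeroExt.snd (map_mul toTrivSqZeroExt x y)).trans
    (TrivSqZeroExt.snd_mul _ _)

variable {k : Type v} [Field k] {V : Type u} [AddCommGroup V] [Module k V]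

theorem rank_torHomology_exteriorAlgebra {κ : Type*} [Fintype κ] (b : Module.Basis κ k V) (i : ℕ) :
    Module.rank k (torHomology (algebraMapInv (R := k) (M := V))
      (ExteriorAlgebra k V ⧸ RingHom.ker (algebraMapInv (R := k) (M := V))) i) =
      Nat.multichoose (Fintype.card κ) i := by
  classical
  apply le_antisymm
  · have span_eq := span_ι_eq_ker_algebraMapInv b.span_eq
    rw [← Set.image_univ, ← Finset.coe_univ] at span_eq
    rw [← span_eq]
    exact rank_torHomology_quotient_span_ι_le b Finset.univ i
  · refine multichoose_le_rank_torHomology algebraMapInv (e := fun j ↦ ι k (b j))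
      (m := Submodule.Quotient.mk 1) (δ := fun j ↦ b.coord j ∘ₗ ιInv)
      (φ := (quotientAugmentationEquiv algebraMapInv).toLinearMap) (fun j ↦ ι_sq_zero _)
      (fun j l ↦ ι_add_mul_swap _ _) (fun j ↦ algebraMapInv_ι _) (fun j ↦ ?_) (fun j x y ↦ ?_)
      (fun j l ↦ ?_) (quotientAugmentationEquiv_smul _) (map_one algebraMapInv) i
    · rw [← Submodule.Quotient.mk_smul, smul_eq_mul, mul_one, Submodule.Quotient.mk_eq_zero]
      exact algebraMapInv_ι _
    · simp [ιInv_mul, mul_comm]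
    · rw [LinearMap.comp_apply, ι_leftInverse, b.coord_apply, b.repr_self, Finsupp.single_apply]

end ExteriorTor

section ExtAlg

variable (k : Type) [Field k] (n : ℕ)

/-- The generator `e_i` of the exterior algebra. -/
def extGen (i : Fin n) : ExtAlg k n :=
  RingQuot.mkAlgHom k (ExtRel k n) (FreeAlgebra.ι k i)

variable {k n}

theorem extGen_mul_self (i : Fin n) : extGen k n i * extGen k n i = 0 := by
  rw [extGen, ← map_mul,
    RingQuot.mkAlgHom_rel k (show ExtRel k n _ 0 from ⟨.inr ⟨i, rfl⟩, rfl⟩), map_zero]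

theorem extGen_mul_add_swap (i j : Fin n) :
    extGen k n i * extGen k n j + extGen k n j * extGen k n i = 0 := by
  rw [extGen, extGen, ← map_mul, ← map_mul, ← map_add,
    RingQuot.mkAlgHom_rel k (show ExtRel k n _ 0 from ⟨.inl ⟨i, j, rfl⟩, rfl⟩), map_zero]

theorem sum_extGen_mul_self (v : Fin n → k) :
    (∑ i, v i • extGen k n i) * ∑ i, v i • extGen k n i = 0 := by
  simp only [Finset.sum_mul_sum, smul_mul_smul_comm]
  refine sum_sum_eq_zero_of_alternating (fun i ↦ ?_) fun i j ↦ ?_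
  · rw [extGen_mul_self, smul_zero]
  · rw [mul_comm (v j), ← smul_add, extGen_mul_add_swap, smul_zero]

variable (k n)

/-- The homomorphism `ι v ↦ ∑ i, v i • e_i` given by the universal property of Mathlib's exterior
algebra. -/
def exteriorAlgebraToExtAlg : ExteriorAlgebra k (Fin n → k) →ₐ[k] ExtAlg k n :=
  ExteriorAlgebra.lift k ⟨Fintype.linearCombination k (extGen k n), sum_extGen_mul_self⟩

/-- The homomorphism `e_i ↦ ι (Pi.single i 1)` given by the presentation of `ExtAlg k n`. -/
def extAlgToExteriorAlgebra : ExtAlg k n →ₐ[k] ExteriorAlgebra k (Fin n → k) :=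
  RingQuot.liftAlgHom k
    ⟨FreeAlgebra.lift k fun i ↦ ExteriorAlgebra.ι k (Pi.single i 1), by
      rintro x y ⟨⟨i, j, rfl⟩ | ⟨i, rfl⟩, rfl⟩ <;> simp⟩

variable {k n}

theorem exteriorAlgebraToExtAlg_ι_single (i : Fin n) :
    exteriorAlgebraToExtAlg k n (ExteriorAlgebra.ι k (Pi.single i 1)) = extGen k n i :=
  (ExteriorAlgebra.lift_ι_apply k _ _ _).trans <| by
    rw [Fintype.linearCombination_apply_single, one_smul]

theorem extAlgToExteriorAlgebra_extGen (i : Fin n) :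
    extAlgToExteriorAlgebra k n (extGen k n i) = ExteriorAlgebra.ι k (Pi.single i 1) :=
  (RingQuot.liftAlgHom_mkAlgHom_apply k _ _ _).trans (FreeAlgebra.lift_ι_apply _ _)

theorem extAug_extGen (i : Fin n) : extAug k n (extGen k n i) = 0 :=
  (RingQuot.liftAlgHom_mkAlgHom_apply k _ _ _).trans (FreeAlgebra.lift_ι_apply _ _)

theorem extAlg_algHom_ext {R : Type*} [Semiring R] [Algebra k R] {f g : ExtAlg k n →ₐ[k] R}
    (h : ∀ i, f (extGen k n i) = g (extGen k n i)) : f = g :=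
  RingQuot.ringQuot_ext' k f g (FreeAlgebra.hom_ext (funext h))

theorem exteriorAlgebra_pi_algHom_ext {R : Type*} [Semiring R] [Algebra k R]
    {f g : ExteriorAlgebra k (Fin n → k) →ₐ[k] R}
    (h : ∀ i, f (ExteriorAlgebra.ι k (Pi.single i 1)) = g (ExteriorAlgebra.ι k (Pi.single i 1))) :
    f = g :=
  ExteriorAlgebra.hom_ext ((Pi.basisFun k (Fin n)).ext fun i ↦ by simpa using h i)

variable (k n) in
/-- The comparison of the presented exterior algebra with Mathlib's. -/
def exteriorAlgebraEquivExtAlg : ExteriorAlgebra k (Fin n → k) ≃ₐ[k] ExtAlg k n :=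
  AlgEquiv.ofAlgHom (exteriorAlgebraToExtAlg k n) (extAlgToExteriorAlgebra k n)
    (extAlg_algHom_ext fun i ↦ by
      rw [AlgHom.comp_apply, extAlgToExteriorAlgebra_extGen, exteriorAlgebraToExtAlg_ι_single,
        AlgHom.id_apply])
    (exteriorAlgebra_pi_algHom_ext fun i ↦ by
      rw [AlgHom.comp_apply, exteriorAlgebraToExtAlg_ι_single, extAlgToExteriorAlgebra_extGen,
        AlgHom.id_apply])

variable (k n) in
theorem extAug_comp_exteriorAlgebraEquivExtAlg :
    (extAug k n).comp
        (exteriorAlgebraEquivExtAlg k n : ExteriorAlgebra k (Fin n → k) →ₐ[k] ExtAlg k n) =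
      ExteriorAlgebra.algebraMapInv :=
  exteriorAlgebra_pi_algHom_ext fun i ↦ calc
    _ = extAug k n (extGen k n i) := congrArg _ (exteriorAlgebraToExtAlg_ι_single i)
    _ = 0 := extAug_extGen i
    _ = _ := (algebraMapInv_ι _).symm

end ExtAlg

/-- For every `i ≥ 0`,
`dim_k Tor_i^{E ⊗ E^op}(k, E) = binom(n+i-1, i)`, where `E` is an `E ⊗ E^op`-module
via `(a ⊗ b) · s = a s b`, `k` is an `E ⊗ E^op`-module via the augmentation sending
each `e_i ⊗ 1` and `1 ⊗ e_i` to `0`, and the Tor group is realized as the `i`-th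
homology of the standard complex `(E^{⊗ •}, δ)` computing the Hochschild homology of
`E` with coefficients in `k`.  (Equivalently, the Hilbert series
`∑ dim_k Tor_i^{E ⊗ E^op}(k,E) tⁱ` equals `1/(1-t)^n`, the Hilbert series of the
commutative polynomial ring in `n` variables.) -/
theorem exterior_hochschild_homology_rank (k : Type) [Field k] (n : ℕ) (hn : 1 ≤ n) :
    ∀ i : ℕ,
      Module.rank k (hH k (ExtAlg k n) (extAug k n) i : Type) =
        ((n + i - 1).choose i : Cardinal) := by
  rintro (_ | i)
  · simp [rank_hH_zero]
  · rw [rank_hH_succ (extAug_comp_exteriorAlgebraEquivExtAlg k n)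
      (quotientAugmentationEquiv_smul _), rank_torHomology_exteriorAlgebra (Pi.basisFun k (Fin n)),
      Fintype.card_fin, Nat.multichoose_eq]

end
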